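/- Let Γ ⊂ PSL(3,ℂ) be a discrete group with LiG(ℙ²_ℂ∖C(Γ)) = 1 and let ℓ be the unique complex line contained in C(Γ). If the restricted group Γ|_ℓ ⊂ Bihol(ℓ) ≅ PSL(2,ℂ) is conjugate to a subgroup of the rotation group (the image of SU(2) in PSL(2,ℂ)), then LiG(Eq(Γ)) = 1. -/

import Mathlib

/-!
In the coordinates of `ℂ³` adapted to the invariant line `ℓ`, every element of `Γ` is a similarity
`x ↦ l⁻¹ (U x + b)` of the affine plane `ℙ² ∖ ℓ`, with `U` unitary. If `‖l‖ = 1` for all of them,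
then `Γ` acts by isometries and is normal on the affine plane. Otherwise some element has
`‖l‖ > 1`; it fixes a point of the affine plane, and conjugating by its powers shrinks the
translation part of any `γ ∈ Γ` relative to that point, so discreteness forces all of `Γ` to fix it.
In that case `Γ` is normal on the affine plane away from the fixed point.

As `Γ` is discrete and infinite, its parameters `(b, l)` are unbounded. After rescaling, the limit
of a divergent sequence is therefore constant on the affine plane, whereas along `ℓ` the
sequence subconverges to a unitary, hence injective, map. So `Γ` is normal nowhere on `ℓ`, and `ℓ`
is the only line avoiding the equicontinuity set.
-/

open scoped LinearAlgebra.Projectivization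
open Projectivization Matrix Topology

noncomputable section

abbrev V3 : Type := Fin 3 → ℂ
abbrev SL3 := Matrix.SpecialLinearGroup (Fin 3) ℂ
abbrev PSL3 := SL3 ⧸ Subgroup.center SL3
abbrev P2 := ℙ ℂ V3

instance : TopologicalSpace P2 := instTopologicalSpaceQuotient

/-- The action of `SL(3,ℂ)` on `ℙ²_ℂ`. -/
def smulP2 (A : SL3) : P2 → P2 :=
  Projectivization.map ((Matrix.SpecialLinearGroup.toLin' A : V3 ≃ₗ[ℂ] V3) : V3 →ₗ[ℂ] V3)
    (Matrix.SpecialLinearGroup.toLin' A).injective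

lemma smulP2_mk (A : SL3) (v : V3) (hv : v ≠ 0) :
    smulP2 A (Projectivization.mk ℂ v hv) =
      Projectivization.mk ℂ (Matrix.SpecialLinearGroup.toLin' A v)
        ((Matrix.SpecialLinearGroup.toLin' A).map_ne_zero_iff.mpr hv) := rfl

lemma smulP2_one : smulP2 (1 : SL3) = id := by
  funext x
  induction x using Projectivization.ind with
  | h v hv => simp [smulP2_mk]

lemma smulP2_mul (A B : SL3) : smulP2 (A * B) = smulP2 A ∘ smulP2 B := by
  funext x
  induction x using Projectivization.ind with
  | h v hv =>
    simp only [smulP2_mk, Function.comp_apply, _root_.map_mul]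
    rfl

lemma continuous_smulP2 (A : SL3) : Continuous (smulP2 A) := by
  unfold smulP2 Projectivization.map
  exact Continuous.quotient_map'
    ((((Matrix.SpecialLinearGroup.toLin' A : V3 ≃ₗ[ℂ] V3) :
        V3 →ₗ[ℂ] V3).continuous_of_finiteDimensional.comp
      continuous_subtype_val).subtype_mk _) _
lemma smulP2_center (A : SL3) (hA : A ∈ Subgroup.center SL3) : smulP2 A = id := by
  obtain ⟨r, hr3, hrA⟩ := Matrix.SpecialLinearGroup.mem_center_iff.mp hA
  have hr0 : r ≠ 0 := by
    intro h
    rw [h] at hr3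
    simp at hr3
  funext x
  induction x using Projectivization.ind with
  | h v hv =>
    have hAv : Matrix.SpecialLinearGroup.toLin' A v = r • v := by
      rw [Matrix.SpecialLinearGroup.toLin'_apply]
      have : ((A : Matrix (Fin 3) (Fin 3) ℂ)) = Matrix.scalar (Fin 3) r := by
        rw [← hrA]
      rw [this]
      funext i
      simp [Matrix.toLin'_apply, Matrix.scalar, Matrix.mulVec_diagonal]
  
    simp only [smulP2_mk, id_eq]
    rw [Projectivization.mk_eq_mk_iff]
    exact ⟨Units.mk0 r hr0, by simp [hAv]⟩

/-- The action of `SL(3,ℂ)` on `ℙ²` as a homomorphism into permutations. -/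
def slPerm : SL3 →* Equiv.Perm P2 where
  toFun A :=
    { toFun := smulP2 A
      invFun := smulP2 A⁻¹
      left_inv := fun x => by
        have := (smulP2_mul A⁻¹ A).symm
        simp only [inv_mul_cancel, smulP2_one] at this
        exact congrFun this x
      right_inv := fun x => by
        have := (smulP2_mul A A⁻¹).symm
        simp only [mul_inv_cancel, smulP2_one] at this
        exact congrFun this x }
  map_one' := by
    ext x
    simp [smulP2_one]
  map_mul' A B := by
    ext x
    simp [smulP2_mul]

/-- The action of `PSL(3,ℂ)` on `ℙ²` as a homomorphism into permutations. -/
def actHom : PSL3 →* Equiv.Perm P2 :=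
  QuotientGroup.lift (Subgroup.center SL3) slPerm (by
    intro A hA
    ext x
    simpa [slPerm] using congrFun (smulP2_center A hA) x)

/-- The action of an element of `PSL(3,ℂ)` on `ℙ²`. -/
def pact (g : PSL3) : P2 → P2 := actHom g

instance : MulAction PSL3 P2 where
  smul g x := pact g x
  one_smul x := by
    show pact 1 x = x
    simp [pact]
  mul_smul g h x := by
    show pact (g * h) x = pact g (pact h x)
    simp [pact]

lemma pact_mk (A : SL3) : pact ((QuotientGroup.mk A : PSL3)) = smulP2 A := by
  funext x
  simp [pact, actHom, slPerm]

lemma continuous_pact (g : PSL3) : Continuous (pact g) := by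
  obtain ⟨A, rfl⟩ := QuotientGroup.mk_surjective g
  rw [pact_mk]
  exact continuous_smulP2 A

/-- The action of an element of `PSL(3,ℂ)` on `ℙ²`, as a continuous map. -/
def pactCM (g : PSL3) : C(P2, P2) := ⟨pact g, continuous_pact g⟩
instance : TopologicalSpace SL3 := instTopologicalSpaceSubtype

/-- A complex line in `ℙ²_ℂ`: the set of points whose representing vectors lie in
a fixed 2-dimensional complex linear subspace of `ℂ³`. -/
def IsLine (ℓ : Set P2) : Prop :=
  ∃ W : Submodule ℂ V3, Module.finrank ℂ W = 2 ∧ ℓ = {p : P2 | p.submodule ≤ W}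

/-- The set of complex lines contained in a given subset of `ℙ²_ℂ`. -/
def linesIn (S : Set P2) : Set (Set P2) := {ℓ | IsLine ℓ ∧ ℓ ⊆ S}

/-- A family of lines is in general position if no point lies on three
(pairwise distinct) lines of the family. -/
def InGenPos (L : Set (Set P2)) : Prop :=
  ∀ p : P2, ∀ ℓ₁ ∈ L, ∀ ℓ₂ ∈ L, ∀ ℓ₃ ∈ L,
    p ∈ ℓ₁ → p ∈ ℓ₂ → p ∈ ℓ₃ → ℓ₁ = ℓ₂ ∨ ℓ₁ = ℓ₃ ∨ ℓ₂ = ℓ₃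

/-- The families of complex lines in general position contained in the complement of `Ω`. -/
def genFamilies (Ω : Set P2) : Set (Set (Set P2)) :=
  {L | (∀ ℓ ∈ L, IsLine ℓ ∧ ℓ ⊆ Ωᶜ) ∧ InGenPos L}

/-- `Li Ω` : the number (in `ℕ∞`) of complex lines contained in the complement of `Ω`. -/
def Li (Ω : Set P2) : ℕ∞ := (linesIn Ωᶜ).encard

/-- `LiG Ω` : the maximal number (in `ℕ∞`) of complex lines in general position contained
in the complement of `Ω`. -/
def LiG (Ω : Set P2) : ℕ∞ := ⨆ L ∈ genFamilies Ω, L.encard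

/-- `Γ` acts properly discontinuously on the nonempty open invariant set `Ω`. -/
def ActsPropDiscOn (Γ : Subgroup PSL3) (Ω : Set P2) : Prop :=
  Ω.Nonempty ∧ IsOpen Ω ∧ (∀ γ ∈ Γ, pact γ '' Ω = Ω) ∧
    ∀ K : Set P2, K ⊆ Ω → IsCompact K →
      {γ : PSL3 | γ ∈ Γ ∧ ((pact γ '' K) ∩ K).Nonempty}.Finite

/-- `Ω` is a maximal open set on which `Γ` acts properly discontinuously. -/
def MaxDisc (Γ : Subgroup PSL3) (Ω : Set P2) : Prop :=
  ActsPropDiscOn Γ Ω ∧ ∀ Ω' : Set P2, ActsPropDiscOn Γ Ω' → Ω ⊆ Ω' → Ω' = Ω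

/-- `L0 Γ` : the closure of the set of points with infinite isotropy group. -/
def L0 (Γ : Subgroup PSL3) : Set P2 :=
  closure {z : P2 | {γ : PSL3 | γ ∈ Γ ∧ pact γ z = z}.Infinite}

/-- The cluster points of the orbit `Γ z`. -/
def orbitCluster (Γ : Subgroup PSL3) (z : P2) : Set P2 :=
  {w : P2 | ∀ U ∈ nhds w, {γ : PSL3 | γ ∈ Γ ∧ pact γ z ∈ U}.Infinite}

/-- The cluster points of `Γ K` for a set `K`. -/
def setCluster (Γ : Subgroup PSL3) (K : Set P2) : Set P2 :=
  {w : P2 | ∀ U ∈ nhds w, {γ : PSL3 | γ ∈ Γ ∧ ((pact γ '' K) ∩ U).Nonempty}.Infinite}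

/-- `L1 Γ` : the closure of the set of cluster points of orbits `Γ z`, `z ∉ L0 Γ`. -/
def L1 (Γ : Subgroup PSL3) : Set P2 :=
  closure (⋃ z ∈ (L0 Γ)ᶜ, orbitCluster Γ z)

/-- `L2 Γ` : the closure of the set of cluster points of `Γ K`,
`K` a compact subset of `ℙ²_ℂ ∖ (L0 Γ ∪ L1 Γ)`. -/
def L2 (Γ : Subgroup PSL3) : Set P2 :=
  closure (⋃ K ∈ {K : Set P2 | IsCompact K ∧ K ⊆ (L0 Γ ∪ L1 Γ)ᶜ}, setCluster Γ K)

/-- The Kulkarni limit set `Λ(Γ)`. -/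
def kulkarniLimit (Γ : Subgroup PSL3) : Set P2 := L0 Γ ∪ L1 Γ ∪ L2 Γ

/-- The Kulkarni discontinuity region `Ω(Γ)`. -/
def kulkarniRegion (Γ : Subgroup PSL3) : Set P2 := (kulkarniLimit Γ)ᶜ

/-- `C(Γ)` : the closure of the union of the Kulkarni limit sets of the cyclic
subgroups generated by the elements of `Γ`. -/
def CSet (Γ : Subgroup PSL3) : Set P2 :=
  closure (⋃ γ ∈ Γ, kulkarniLimit (Subgroup.zpowers γ))

/-- The equicontinuity set of `Γ` : points having a neighborhood `U` on which the
restrictions of the elements of `Γ` form a normal family, i.e. a relatively compact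
subset of `C(U, ℙ²_ℂ)` for the compact-open topology. -/
def eqSet (Γ : Subgroup PSL3) : Set P2 :=
  {z : P2 | ∃ U : Set P2, IsOpen U ∧ z ∈ U ∧
    IsCompact (closure {f : C(U, P2) | ∃ γ ∈ Γ, f = (pactCM γ).restrict U})}

/-- A vertex of a family `L` of lines lying in the complement of `Ω`. -/
def IsVertex (Ω : Set P2) (L : Set (Set P2)) (v : P2) : Prop :=
  ∃ ℓ₁ ∈ L, ∃ ℓ₂ ∈ L, ℓ₁ ≠ ℓ₂ ∧ ∃ C : Set (Set P2), C.Infinite ∧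
    (∀ ℓ ∈ C, IsLine ℓ ∧ ℓ ⊆ Ωᶜ) ∧ ℓ₁ ∩ ℓ₂ ∩ ⋂₀ C = {v}

open Classical

/-- Projection from the point `p` onto the line determined by `W` : `projPt p W x` is
the intersection point of the line through `p` and `x` with the line determined by `W`
(junk value if it is not unique). -/
def projPt (p : P2) (W : Submodule ℂ V3) (x : P2) : P2 :=
  if h : ∃ y : P2, y.submodule ≤ W ∧ y.submodule ≤ p.submodule ⊔ x.submodule
  then h.choose else x

/-! ### Topology of the projective plane -/

lemma isOpenQuotientMap_mk' :
    IsOpenQuotientMap (Projectivization.mk' ℂ : {v : V3 // v ≠ 0} → P2) := by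
  suffices ∀ s : Setoid {v : V3 // v ≠ 0}, s = MulAction.orbitRel ℂˣ {v : V3 // v ≠ 0} →
      IsOpenQuotientMap (Quotient.mk s) from
    this _ (Setoid.ext fun v w => (Units.orbitRel_nonZero_iff ℂ V3 v w).symm)
  rintro _ rfl
  have : ContinuousConstSMul ℂˣ {v : V3 // v ≠ 0} :=
    ⟨fun a => (continuous_subtype_val.const_smul a).subtype_mk _⟩
  exact MulAction.isOpenQuotientMap_quotientMk

instance : T2Space P2 := by
  rw [t2Space_iff_of_isOpenQuotientMap isOpenQuotientMap_mk']
  simp only [mk'_eq_mk, mk_eq_mk_iff_crossProduct_eq_zero]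
  have hcross : Continuous fun p : V3 × V3 => crossProduct p.1 p.2 := by
    refine continuous_pi fun i => ?_
    fin_cases i <;> simp only [cross_apply] <;> dsimp <;> fun_prop
  exact isClosed_singleton.preimage
    (hcross.comp (continuous_subtype_val.prodMap continuous_subtype_val))

lemma isOpen_cone {O : Set P2} (hO : IsOpen O) :
    IsOpen {v : V3 | ∃ hv : v ≠ 0, Projectivization.mk ℂ v hv ∈ O} := by
  have h := isOpen_ne.isOpenMap_subtype_val _ (hO.preimage isOpenQuotientMap_mk'.continuous)
  convert h using 1
  ext v
  simp

lemma tendsto_mk {ι : Type*} {F : Filter ι} {f : ι → V3} {g : ι → P2} {v : V3}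
    (hf : Filter.Tendsto f F (𝓝 v)) (hv : v ≠ 0)
    (hg : ∀ i (hi : f i ≠ 0), g i = Projectivization.mk ℂ (f i) hi) :
    Filter.Tendsto g F (𝓝 (Projectivization.mk ℂ v hv)) := by
  refine tendsto_nhds.mpr fun O hO hvO => ?_
  filter_upwards [hf.eventually_mem ((isOpen_cone hO).mem_nhds ⟨hv, hvO⟩)] with i ⟨hi, hiO⟩
  exact Set.mem_preimage.mpr (hg i hi ▸ hiO)

/-- The points of `ℙ²_ℂ` in the projectivization of the subspace `W`; a line when `dim W = 2`. -/
def pointsOf (W : Submodule ℂ V3) : Set P2 := {p : P2 | p.submodule ≤ W}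

lemma mk_mem_pointsOf {W : Submodule ℂ V3} {v : V3} (hv : v ≠ 0) :
    Projectivization.mk ℂ v hv ∈ pointsOf W ↔ v ∈ W := by
  rw [← Submodule.span_singleton_le_iff_mem, ← submodule_mk v hv]
  rfl

lemma pointsOf_nonempty {W : Submodule ℂ V3} (hW : W ≠ ⊥) : (pointsOf W).Nonempty := by
  obtain ⟨v, hvW, hv⟩ := W.ne_bot_iff.mp hW
  exact ⟨_, (mk_mem_pointsOf hv).mpr hvW⟩

lemma dense_compl_pointsOf {W : Submodule ℂ V3} (hW : W ≠ ⊤) : Dense (pointsOf W)ᶜ := by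
  refine dense_iff_inter_open.mpr fun O hO ⟨p, hpO⟩ => ?_
  by_contra hdisj
  refine hW (Submodule.eq_top_of_nonempty_interior' _
    ⟨p.rep, interior_maximal ?_ (isOpen_cone hO) ⟨p.rep_nonzero, by rwa [mk_rep]⟩⟩)
  rintro v ⟨hv, hvO⟩
  by_contra hvW
  exact hdisj ⟨_, hvO, (mk_mem_pointsOf hv).not.mpr hvW⟩

/-! ### Matrices representing projective transformations -/

/-- `M` is a matrix of the projective transformation `γ`, i.e. proportional to a lift of `γ` to
`SL(3,ℂ)`; the factor `c` is automatically nonzero. -/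
def Represents (M : Matrix (Fin 3) (Fin 3) ℂ) (γ : PSL3) : Prop :=
  ∃ A : SL3, (A : PSL3) = γ ∧ ∃ c : ℂ, (A : Matrix (Fin 3) (Fin 3) ℂ) = c • M

namespace Represents

variable {M N : Matrix (Fin 3) (Fin 3) ℂ} {γ δ : PSL3}

lemma det_ne_zero (h : Represents M γ) : M.det ≠ 0 := by
  obtain ⟨A, -, c, hA⟩ := h
  intro h0
  simpa [h0] using congrArg Matrix.det hA

lemma mulVec_ne_zero (h : Represents M γ) {v : V3} (hv : v ≠ 0) : M *ᵥ v ≠ 0 :=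
  mt (Matrix.eq_zero_of_mulVec_eq_zero h.det_ne_zero) hv

lemma pact_mk (h : Represents M γ) {v : V3} (hv : v ≠ 0) :
    pact γ (Projectivization.mk ℂ v hv) = Projectivization.mk ℂ (M *ᵥ v) (h.mulVec_ne_zero hv) := by
  obtain ⟨A, rfl, c, hA⟩ := h
  rw [_root_.pact_mk, smulP2_mk, mk_eq_mk_iff']
  exact ⟨c, by rw [Matrix.SpecialLinearGroup.toLin'_apply, Matrix.toLin'_apply, hA, smul_mulVec]⟩

lemma smul (h : Represents M γ) {r : ℂ} (hr : r ≠ 0) : Represents (r • M) γ := by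
  obtain ⟨A, hAγ, c, hA⟩ := h
  exact ⟨A, hAγ, c / r, by rw [smul_smul, div_mul_cancel₀ c hr, hA]⟩

lemma mul (hM : Represents M γ) (hN : Represents N δ) : Represents (M * N) (γ * δ) := by
  obtain ⟨A, rfl, c, hA⟩ := hM
  obtain ⟨B, rfl, d, hB⟩ := hN
  exact ⟨A * B, rfl, c * d, (Matrix.SpecialLinearGroup.coe_mul A B).trans (by
    rw [hA, hB, smul_mul_smul_comm])⟩

lemma inv (hM : Represents M γ) (hMN : M * N = 1) : Represents N γ⁻¹ := by
  obtain ⟨A, rfl, c, hA⟩ := hM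
  have hc : c ≠ 0 := by
    rintro rfl
    simpa [hA] using A.det_coe
  refine ⟨A⁻¹, rfl, c⁻¹, left_inv_eq_right_inv (a := (A : Matrix (Fin 3) (Fin 3) ℂ)) ?_ ?_⟩
  · exact congrArg Subtype.val (inv_mul_cancel A)
  · rw [hA, smul_mul_smul_comm, hMN, mul_inv_cancel₀ hc, one_smul]

lemma tendsto_pact {ι : Type*} {F : Filter ι} {M : ι → Matrix (Fin 3) (Fin 3) ℂ} {γ : ι → PSL3}
    (h : ∀ i, Represents (M i) (γ i)) {M₀ : Matrix (Fin 3) (Fin 3) ℂ}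
    (hM : Filter.Tendsto M F (𝓝 M₀)) {v : V3} (hv : v ≠ 0) (hv₀ : M₀ *ᵥ v ≠ 0) :
    Filter.Tendsto (fun i => pact (γ i) (Projectivization.mk ℂ v hv)) F
      (𝓝 (Projectivization.mk ℂ (M₀ *ᵥ v) hv₀)) :=
  tendsto_mk (((continuous_id.matrix_mulVec continuous_const).tendsto M₀).comp hM) hv₀
    fun i _ => (h i).pact_mk hv

end Represents

/-! ### Normality criterion -/

/-- The projective map induced by `M`; its value at a point `p` of the kernel is the junk
value `p`. -/
def projMap (M : Matrix (Fin 3) (Fin 3) ℂ) (p : P2) : P2 :=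
  if h : M *ᵥ p.rep ≠ 0 then Projectivization.mk ℂ _ h else p

lemma mulVec_rep_ne_zero_iff (M : Matrix (Fin 3) (Fin 3) ℂ) {v : V3} (hv : v ≠ 0) :
    M *ᵥ (Projectivization.mk ℂ v hv).rep ≠ 0 ↔ M *ᵥ v ≠ 0 := by
  obtain ⟨a, ha⟩ := exists_smul_eq_mk_rep ℂ v hv
  rw [← ha, Units.smul_def, mulVec_smul, ← Units.smul_def, smul_ne_zero_iff_ne]

lemma projMap_mk (M : Matrix (Fin 3) (Fin 3) ℂ) {v : V3} (hv : v ≠ 0) (h : M *ᵥ v ≠ 0) :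
    projMap M (Projectivization.mk ℂ v hv) = Projectivization.mk ℂ (M *ᵥ v) h := by
  obtain ⟨a, ha⟩ := exists_smul_eq_mk_rep ℂ v hv
  rw [projMap, dif_pos ((mulVec_rep_ne_zero_iff M hv).mpr h), mk_eq_mk_iff']
  exact ⟨a, by rw [← ha, Units.smul_def, mulVec_smul]⟩

lemma Represents.projMap_eq_pact {M : Matrix (Fin 3) (Fin 3) ℂ} {γ : PSL3} (h : Represents M γ)
    (p : P2) : projMap M p = pact γ p := by
  induction p using Projectivization.ind with
  | h v hv => rw [projMap_mk M hv (h.mulVec_ne_zero hv), h.pact_mk]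

lemma isOpenQuotientMap_prodMap_mk' :
    IsOpenQuotientMap (Prod.map id (Projectivization.mk' ℂ) :
      Matrix (Fin 3) (Fin 3) ℂ × {v : V3 // v ≠ 0} → Matrix (Fin 3) (Fin 3) ℂ × P2) :=
  IsOpenQuotientMap.id.prodMap isOpenQuotientMap_mk'

lemma continuous_mulVec_coe :
    Continuous fun x : Matrix (Fin 3) (Fin 3) ℂ × {v : V3 // v ≠ 0} => x.1 *ᵥ (x.2 : V3) := by
  fun_prop

lemma isOpen_mulVec_rep_ne_zero :
    IsOpen {x : Matrix (Fin 3) (Fin 3) ℂ × P2 | x.1 *ᵥ x.2.rep ≠ 0} := by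
  rw [← isOpenQuotientMap_prodMap_mk'.isQuotientMap.isOpen_preimage]
  have hpre : Prod.map id (Projectivization.mk' ℂ) ⁻¹'
      {x : Matrix (Fin 3) (Fin 3) ℂ × P2 | x.1 *ᵥ x.2.rep ≠ 0} = {x | x.1 *ᵥ (x.2 : V3) ≠ 0} :=
    Set.ext fun x => mulVec_rep_ne_zero_iff x.1 x.2.2
  rw [hpre]
  exact isOpen_ne_fun continuous_mulVec_coe continuous_const

lemma continuousOn_projMap :
    ContinuousOn (fun x : Matrix (Fin 3) (Fin 3) ℂ × P2 => projMap x.1 x.2)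
      {x | x.1 *ᵥ x.2.rep ≠ 0} := by
  intro x hx
  obtain ⟨⟨M, v, hv⟩, rfl⟩ := isOpenQuotientMap_prodMap_mk'.surjective x
  have hMv : M *ᵥ v ≠ 0 := (mulVec_rep_ne_zero_iff M hv).mp hx
  refine ContinuousAt.continuousWithinAt (isOpenQuotientMap_prodMap_mk'.continuousAt_comp_iff.mp ?_)
  have hlim := tendsto_mk (continuous_mulVec_coe.tendsto (M, ⟨v, hv⟩)) hMv
    fun x hx => projMap_mk x.1 x.2.2 hx
  rwa [← projMap_mk M hv hMv] at hlim

lemma mem_eqSet_of_isCompact {Γ : Subgroup PSL3} {K : Set (Matrix (Fin 3) (Fin 3) ℂ)}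
    (hK : IsCompact K) (hΓ : ∀ γ ∈ Γ, ∃ M ∈ K, Represents M γ) {v : V3} (hv : v ≠ 0)
    (hKv : ∀ M ∈ K, M *ᵥ v ≠ 0) : Projectivization.mk ℂ v hv ∈ eqSet Γ := by
  obtain ⟨u, O, -, hO, hKu, hvO, hKO⟩ := generalized_tube_lemma hK
    (isCompact_singleton (x := Projectivization.mk ℂ v hv)) isOpen_mulVec_rep_ne_zero
    (by rintro ⟨M, _⟩ ⟨hM, rfl⟩; exact (mulVec_rep_ne_zero_iff M hv).mpr (hKv M hM))
  let Φ : C(K × O, P2) := ⟨fun x => projMap x.1 x.2,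
    continuousOn_projMap.comp_continuous
      (continuous_subtype_val.prodMap continuous_subtype_val) fun x => hKO ⟨hKu x.1.2, x.2.2⟩⟩
  have : CompactSpace K := isCompact_iff_compactSpace.mp hK
  refine ⟨O, hO, hvO rfl, (isCompact_range Φ.curry.continuous).closure_of_subset ?_⟩
  rintro f ⟨γ, hγ, rfl⟩
  obtain ⟨M, hM, hMγ⟩ := hΓ γ hγ
  exact ⟨⟨M, hM⟩, ContinuousMap.ext fun p => hMγ.projMap_eq_pact p⟩

/- The representing matrices may be rescaled to the unit sphere of the parameter space, whose
intersection with the cone `S` is compact. -/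
lemma mem_eqSet_of_isClosed_cone {Γ : Subgroup PSL3} {P : Type*} [NormedAddCommGroup P]
    [NormedSpace ℂ P] [FiniteDimensional ℂ P] (L : P →ₗ[ℂ] Matrix (Fin 3) (Fin 3) ℂ) {S : Set P}
    (hS : IsClosed S) (hsmul : ∀ c : ℂ, ∀ p ∈ S, c • p ∈ S)
    (hΓ : ∀ γ ∈ Γ, ∃ p ∈ S, Represents (L p) γ) {v : V3} (hv : v ≠ 0)
    (hker : ∀ p ∈ S, L p *ᵥ v = 0 → p = 0) : Projectivization.mk ℂ v hv ∈ eqSet Γ := by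
  have : ProperSpace P := FiniteDimensional.proper ℂ P
  have hK : IsCompact (L '' (Metric.sphere 0 1 ∩ S)) :=
    ((isCompact_sphere 0 1).inter_right hS).image L.continuous_of_finiteDimensional
  refine mem_eqSet_of_isCompact hK (fun γ hγ => ?_) hv ?_
  · obtain ⟨p, hpS, hp⟩ := hΓ γ hγ
    have hp0 : p ≠ 0 := by
      rintro rfl
      simpa using hp.det_ne_zero
    have hnorm : (‖p‖ : ℂ)⁻¹ ≠ 0 := by simpa using hp0
    refine ⟨_, ⟨(‖p‖ : ℂ)⁻¹ • p, ⟨?_, hsmul _ _ hpS⟩, rfl⟩, ?_⟩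
    · simp [norm_smul, hp0]
    · rw [map_smul]
      exact hp.smul hnorm
  · rintro _ ⟨p, ⟨hp1, hpS⟩, rfl⟩ h0
    simp [hker p hpS h0] at hp1

lemma exists_tendsto_of_mem_eqSet {Γ : Subgroup PSL3} {z : P2} (hz : z ∈ eqSet Γ) {ι : Type*}
    (F : Ultrafilter ι) {γ : ι → PSL3} (hγ : ∀ i, γ i ∈ Γ) :
    ∃ O : Set P2, IsOpen O ∧ z ∈ O ∧ ∃ f : C(O, P2),
      ∀ p : O, Filter.Tendsto (fun i => pact (γ i) p) F (𝓝 (f p)) := by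
  obtain ⟨O, hO, hzO, hcompact⟩ := hz
  let g : ι → C(O, P2) := fun i => (pactCM (γ i)).restrict O
  obtain ⟨f, -, hf⟩ := hcompact.ultrafilter_le_nhds (F.map g) <|
    Filter.tendsto_principal.mpr (.of_forall fun i => subset_closure ⟨γ i, hγ i, rfl⟩)
  exact ⟨O, hO, hzO, f, fun p => ((continuous_eval_const p).tendsto f).comp hf⟩

/-! ### Discrete groups -/

instance : IsTopologicalGroup SL3 := Matrix.SpecialLinearGroup.topologicalGroup

lemma isClosedEmbedding_SL3_val :
    IsClosedEmbedding (Subtype.val : SL3 → Matrix (Fin 3) (Fin 3) ℂ) :=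
  Matrix.SpecialLinearGroup.isClosedEmbedding_val

instance : T2Space PSL3 := by
  have : T2Space SL3 := isClosedEmbedding_SL3_val.isEmbedding.t2Space
  have : IsClosed (Subgroup.center SL3 : Set SL3) := by
    rw [Subgroup.coe_center, ← Set.centralizer_univ]
    exact Set.isClosed_centralizer _
  infer_instance

/- The condition `det (c • M) = 1` reads `c ^ 3 * det M = 1`, which bounds `c`. -/
lemma exists_isCompact_lifts {K : Set (Matrix (Fin 3) (Fin 3) ℂ)} (hK : IsCompact K)
    (hdet : ∀ M ∈ K, M.det ≠ 0) :
    ∃ C : Set SL3, IsCompact C ∧ ∀ A : SL3, ∀ M ∈ K, ∀ c : ℂ,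
      (A : Matrix (Fin 3) (Fin 3) ℂ) = c • M → A ∈ C := by
  obtain ⟨R, hR⟩ := hK.exists_bound_of_continuousOn
    (continuous_id.matrix_det.continuousOn.inv₀ hdet)
  refine ⟨_, isClosedEmbedding_SL3_val.isCompact_preimage
    (((isCompact_closedBall (0 : ℂ) (max 1 R)).prod hK).image continuous_smul),
    fun A M hM c hA => ?_⟩
  suffices ‖c‖ ≤ max 1 R from
    ⟨(c, M), ⟨mem_closedBall_zero_iff.mpr this, hM⟩, hA.symm⟩
  have hc : c ^ 3 * M.det = 1 := by
    rw [← A.det_coe, hA, det_smul, Fintype.card_fin]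
  have hcR : ‖c‖ ^ 3 ≤ R := by
    rw [← norm_pow, eq_inv_of_mul_eq_one_left hc]
    exact hR M hM
  refine le_max_iff.mpr (or_iff_not_imp_left.mpr fun h1 => ?_)
  exact (le_self_pow₀ (not_le.mp h1).le three_ne_zero).trans hcR

lemma finite_of_isCompact {Γ : Subgroup PSL3} [DiscreteTopology Γ]
    {K : Set (Matrix (Fin 3) (Fin 3) ℂ)} (hK : IsCompact K) (hdet : ∀ M ∈ K, M.det ≠ 0) :
    {γ | γ ∈ Γ ∧ ∃ M ∈ K, Represents M γ}.Finite := by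
  obtain ⟨C, hC, hCK⟩ := exists_isCompact_lifts hK hdet
  have hfin : ((↑) ⁻¹' (QuotientGroup.mk '' C : Set PSL3) : Set Γ).Finite :=
    (Subgroup.isClosed_of_discrete.isClosedEmbedding_subtypeVal.isCompact_preimage
      (hC.image QuotientGroup.continuous_mk)).finite_of_discrete
  refine (hfin.image Subtype.val).subset ?_
  rintro γ ⟨hγ, M, hM, A, rfl, c, hA⟩
  exact ⟨⟨_, hγ⟩, ⟨A, hCK A M hM c hA, rfl⟩, rfl⟩

lemma kulkarniLimit_eq_empty_of_finite (G : Subgroup PSL3) [Finite G] : kulkarniLimit G = ∅ := by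
  have hfin : ∀ q : PSL3 → Prop, ¬ {γ | γ ∈ G ∧ q γ}.Infinite := fun q =>
    Set.not_infinite.mpr ((Set.toFinite (G : Set PSL3)).subset fun _ => And.left)
  have hL0 : L0 G = ∅ := by simp [L0, hfin]
  have horbit : ∀ z, orbitCluster G z = ∅ := fun z =>
    Set.eq_empty_of_forall_notMem fun w hw => hfin _ (hw _ Filter.univ_mem)
  have hset : ∀ K, setCluster G K = ∅ := fun K =>
    Set.eq_empty_of_forall_notMem fun w hw => hfin _ (hw _ Filter.univ_mem)
  simp [kulkarniLimit, hL0, L1, horbit, L2, hset]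

lemma infinite_of_nonempty_CSet {Γ : Subgroup PSL3} (h : (CSet Γ).Nonempty) : Infinite Γ := by
  by_contra hfin
  rw [not_infinite_iff_finite] at hfin
  obtain ⟨γ, hγ, hne⟩ : ∃ γ ∈ Γ, (kulkarniLimit (Subgroup.zpowers γ)).Nonempty := by
    simpa only [CSet, closure_nonempty_iff, Set.nonempty_iUnion, exists_prop] using h
  have : Finite (Subgroup.zpowers γ) := (Set.toFinite (Γ : Set PSL3)).subset
    (Subgroup.zpowers_le.mpr hγ)
  exact hne.ne_empty (kulkarniLimit_eq_empty_of_finite _)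

/-! ### Unitary matrices -/

section Unitary

variable {n 𝕜 : Type*} [Fintype n] [DecidableEq n] [RCLike 𝕜]

lemma isClosed_unitaryGroup : IsClosed (unitaryGroup n 𝕜 : Set (Matrix n n 𝕜)) :=
  isClosed_unitary

open scoped Matrix.Norms.Elementwise in
lemma isCompact_unitaryGroup : IsCompact (unitaryGroup n 𝕜 : Set (Matrix n n 𝕜)) :=
  (isCompact_closedBall 0 1).of_isClosed_subset isClosed_unitaryGroup fun _ hU =>
    mem_closedBall_zero_iff.mpr (entrywise_sup_norm_bound_of_unitary hU)

lemma mulVec_injective_of_mem_unitaryGroup {U : Matrix n n 𝕜} (hU : U ∈ unitaryGroup n 𝕜) :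
    Function.Injective (U *ᵥ ·) :=
  mulVec_injective_of_isUnit (Unitary.isUnit_coe (U := ⟨U, hU⟩))

open scoped Matrix.Norms.L2Operator in
lemma isUnit_scalar_sub_of_mem_unitaryGroup {U : Matrix n n ℂ} (hU : U ∈ unitaryGroup n ℂ) {l : ℂ}
    (hl : ‖l‖ ≠ 1) : IsUnit (algebraMap ℂ (Matrix n n ℂ) l - U) := by
  by_contra h
  exact hl (spectrum.norm_eq_one_of_unitary hU h)

lemma eq_zero_of_mulVec_eq_smul {U : Matrix n n ℂ} (hU : U ∈ unitaryGroup n ℂ) {l : ℂ}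
    (hl : ‖l‖ ≠ 1) {x : n → ℂ} (hx : U *ᵥ x = l • x) : x = 0 := by
  refine mulVec_injective_of_isUnit (isUnit_scalar_sub_of_mem_unitaryGroup hU hl) ?_
  simp [sub_mulVec, Algebra.algebraMap_eq_smul_one, smul_mulVec, hx]

lemma exists_mulVec_add_eq_smul {U : Matrix n n ℂ} (hU : U ∈ unitaryGroup n ℂ) {l : ℂ}
    (hl : ‖l‖ ≠ 1) (b : n → ℂ) : ∃ x, U *ᵥ x + b = l • x := by
  obtain ⟨x, hx⟩ := mulVec_surjective_iff_isUnit.mpr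
    (isUnit_scalar_sub_of_mem_unitaryGroup hU hl) b
  refine ⟨x, ?_⟩
  rw [← hx]
  simp [sub_mulVec, Algebra.algebraMap_eq_smul_one, smul_mulVec]

end Unitary

/-! ### Adapted coordinates -/

section AdaptedCoordinates

/-- The matrix, in the standard basis of `ℂ³`, of the map `(x, t) ↦ (U x + t b, l t)` read in the
coordinates `E`, as a linear function of the parameters `(U, b, l)`. For `U` unitary and `l ≠ 0` it
induces the similarity `x ↦ l⁻¹ (U x + b)` of the affine chart `t = 1`. -/
def simMat (E : ((Fin 2 → ℂ) × ℂ) ≃ₗ[ℂ] V3) :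
    Matrix (Fin 2) (Fin 2) ℂ × (Fin 2 → ℂ) × ℂ →ₗ[ℂ] Matrix (Fin 3) (Fin 3) ℂ where
  toFun p := LinearMap.toMatrix' (E.toLinearMap ∘ₗ
    ((p.1.mulVecLin.coprod (LinearMap.toSpanSingleton ℂ _ p.2.1)).prod
      (p.2.2 • LinearMap.snd ℂ (Fin 2 → ℂ) ℂ)) ∘ₗ E.symm.toLinearMap)
  map_add' p q := by
    refine ((congrArg _ (LinearMap.ext fun v => ?_)).trans (map_add _ _ _))
    refine Eq.trans (congrArg E ?_) (map_add E _ _)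
    ext1 <;> simp [-mulVec_fin_two, add_mul, add_add_add_comm]
  map_smul' r p := by
    refine ((congrArg _ (LinearMap.ext fun v => ?_)).trans (map_smul _ _ _))
    refine Eq.trans (congrArg E ?_) (map_smul E _ _)
    ext1 <;> simp [-mulVec_fin_two, mul_assoc, smul_comm r]

/-- The parameters `(U, b, l)`, with `U` unitary, of the matrices of `γ` in the coordinates `E`. -/
def normalForms (E : ((Fin 2 → ℂ) × ℂ) ≃ₗ[ℂ] V3) (γ : PSL3) :
    Set (Matrix (Fin 2) (Fin 2) ℂ × (Fin 2 → ℂ) × ℂ) :=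
  {p | p.1 ∈ unitaryGroup (Fin 2) ℂ ∧ Represents (simMat E p) γ}

/-- The plane `t = 0` of the coordinates `E`, whose points form the line at infinity of the affine
chart `t = 1`. -/
def planeAtInfinity (E : ((Fin 2 → ℂ) × ℂ) ≃ₗ[ℂ] V3) : Submodule ℂ V3 :=
  LinearMap.range (E.toLinearMap ∘ₗ LinearMap.inl ℂ (Fin 2 → ℂ) ℂ)

variable {E : ((Fin 2 → ℂ) × ℂ) ≃ₗ[ℂ] V3} {γ δ : PSL3} {U U' : Matrix (Fin 2) (Fin 2) ℂ}
  {b b' : Fin 2 → ℂ} {l l' : ℂ}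

lemma mem_planeAtInfinity {x : Fin 2 → ℂ} {t : ℂ} : E (x, t) ∈ planeAtInfinity E ↔ t = 0 := by
  simp [planeAtInfinity, eq_comm]

lemma finrank_planeAtInfinity : Module.finrank ℂ (planeAtInfinity E) = 2 :=
  (LinearMap.finrank_range_of_inj (f := E.toLinearMap ∘ₗ LinearMap.inl ℂ (Fin 2 → ℂ) ℂ)
    (E.injective.comp LinearMap.inl_injective)).trans (by simp)

lemma planeAtInfinity_ne_top : planeAtInfinity E ≠ ⊤ := by
  intro h
  have hrank := finrank_planeAtInfinity (E := E)
  rw [h, finrank_top] at hrank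
  simp at hrank

lemma simMat_mulVec (p : Matrix (Fin 2) (Fin 2) ℂ × (Fin 2 → ℂ) × ℂ) (x : Fin 2 → ℂ) (t : ℂ) :
    simMat E p *ᵥ E (x, t) = E (p.1 *ᵥ x + t • p.2.1, p.2.2 * t) := by
  refine (LinearMap.toMatrix'_mulVec _ _).trans ?_
  simp

lemma ext_of_mulVec_coordinates (E : ((Fin 2 → ℂ) × ℂ) ≃ₗ[ℂ] V3) {M N : Matrix (Fin 3) (Fin 3) ℂ}
    (h : ∀ x t, M *ᵥ E (x, t) = N *ᵥ E (x, t)) : M = N :=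
  Matrix.ext_of_mulVec_single fun i => by
    simpa using h (E.symm (Pi.single i 1)).1 (E.symm (Pi.single i 1)).2

lemma simMat_mul : simMat E (U, b, l) * simMat E (U', b', l') =
    simMat E (U * U', U *ᵥ b' + l' • b, l * l') := by
  refine ext_of_mulVec_coordinates E fun x t => ?_
  rw [← mulVec_mulVec, simMat_mulVec, simMat_mulVec, simMat_mulVec]
  simp only [mulVec_add, mulVec_mulVec, mulVec_smul, smul_add, smul_smul, add_assoc, mul_assoc,
    mul_comm l' t]

lemma simMat_one : simMat E (1, 0, 1) = 1 :=
  ext_of_mulVec_coordinates E fun x t => by simp [simMat_mulVec]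

lemma simMat_mul_inv (hU : U ∈ unitaryGroup (Fin 2) ℂ) (hl : l ≠ 0) :
    simMat E (U, b, l) * simMat E (star U, -(l⁻¹ • (star U *ᵥ b)), l⁻¹) = 1 := by
  rw [simMat_mul, ← simMat_one (E := E), mem_unitaryGroup_iff.mp hU, mulVec_neg, mulVec_smul,
    mulVec_mulVec, mem_unitaryGroup_iff.mp hU, one_mulVec, neg_add_cancel, mul_inv_cancel₀ hl]

lemma det_simMat_ne_zero (hU : U ∈ unitaryGroup (Fin 2) ℂ) (hl : l ≠ 0) :
    (simMat E (U, b, l)).det ≠ 0 :=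
  det_ne_zero_of_right_inverse (simMat_mul_inv hU hl)

lemma ne_zero_of_mem_normalForms (h : (U, b, l) ∈ normalForms E γ) : l ≠ 0 := by
  obtain ⟨v, hv⟩ := mulVec_surjective_iff_isUnit.mpr
    ((isUnit_iff_isUnit_det _).mpr h.2.det_ne_zero.isUnit) (E (0, 1))
  obtain ⟨⟨x, t⟩, rfl⟩ := E.surjective v
  exact left_ne_zero_of_mul_eq_one
    (congrArg Prod.snd (E.injective ((simMat_mulVec _ x t).symm.trans hv)))

lemma mul_mem_normalForms (h : (U, b, l) ∈ normalForms E γ) (h' : (U', b', l') ∈ normalForms E δ) :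
    (U * U', U *ᵥ b' + l' • b, l * l') ∈ normalForms E (γ * δ) :=
  ⟨mul_mem h.1 h'.1, simMat_mul (E := E) ▸ h.2.mul h'.2⟩

lemma inv_mem_normalForms (h : (U, b, l) ∈ normalForms E γ) :
    (star U, -(l⁻¹ • (star U *ᵥ b)), l⁻¹) ∈ normalForms E γ⁻¹ :=
  ⟨Unitary.star_mem h.1, h.2.inv (simMat_mul_inv h.1 (ne_zero_of_mem_normalForms h))⟩

lemma pow_mem_normalForms (h : (U, 0, l) ∈ normalForms E γ) (n : ℕ) :
    (U ^ n, 0, l ^ n) ∈ normalForms E (γ ^ n) := by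
  induction n with
  | zero => exact ⟨by simp, 1, by simp, 1, by simp [simMat_one]⟩
  | succ n ih => simpa [pow_succ] using mul_mem_normalForms ih h

lemma exists_coordinates {ψ : (Fin 2 → ℂ) →ₗ[ℂ] V3} (hψ : Function.Injective ψ) {w : V3}
    (hw : w ∉ LinearMap.range ψ) :
    ∃ E : ((Fin 2 → ℂ) × ℂ) ≃ₗ[ℂ] V3, ∀ x t, E (x, t) = ψ x + t • w := by
  let T : ((Fin 2 → ℂ) × ℂ) →ₗ[ℂ] V3 := ψ.coprod (LinearMap.toSpanSingleton ℂ V3 w)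
  have hT : Function.Injective T := by
    have hw0 : w ≠ 0 := fun h => hw (h ▸ zero_mem _)
    rw [← LinearMap.ker_eq_bot, LinearMap.ker_coprod_of_disjoint_range, LinearMap.ker_eq_bot.mpr hψ,
      LinearMap.ker_toSpanSingleton ℂ hw0, Submodule.prod_bot]
    rw [LinearMap.range_toSpanSingleton]
    exact Submodule.disjoint_span_singleton_of_notMem hw
  exact ⟨LinearEquiv.ofInjectiveOfFinrankEq T hT (by simp), fun x t => rfl⟩

lemma nonempty_normalForms {ψ : (Fin 2 → ℂ) →ₗ[ℂ] V3} (hE : ∀ x, E (x, 0) = ψ x) {A : SL3} {c : ℂ}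
    (hc : c ≠ 0) (hU : U ∈ unitaryGroup (Fin 2) ℂ)
    (hA : ∀ u, (A : Matrix (Fin 3) (Fin 3) ℂ) *ᵥ ψ u = ψ (c • U *ᵥ u)) :
    (normalForms E (A : PSL3)).Nonempty := by
  obtain ⟨⟨y, s⟩, hys⟩ := E.surjective ((A : Matrix (Fin 3) (Fin 3) ℂ) *ᵥ E (0, 1))
  refine ⟨(U, c⁻¹ • y, c⁻¹ * s), hU, A, rfl, c, ext_of_mulVec_coordinates E fun x t => ?_⟩
  have hxt : E (x, t) = ψ x + t • E (0, 1) := by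
    rw [← hE, ← map_smul, ← map_add]
    simp
  calc (A : Matrix (Fin 3) (Fin 3) ℂ) *ᵥ E (x, t) = E (c • U *ᵥ x, 0) + t • E (y, s) := by
        rw [hxt, mulVec_add, mulVec_smul, hA, hys, hE]
    _ = (c • simMat E (U, c⁻¹ • y, c⁻¹ * s)) *ᵥ E (x, t) := by
        rw [smul_mulVec, simMat_mulVec, ← map_smul, ← map_smul, ← map_add]
        congr 1
        ext1
        · simp [-mulVec_fin_two, smul_comm c t, smul_inv_smul₀ hc]
        · simp [← mul_assoc, mul_inv_cancel₀ hc, mul_comm t]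

lemma exists_one_lt_norm {Γ : Subgroup PSL3} {γ : PSL3} (hγ : γ ∈ Γ)
    {p : Matrix (Fin 2) (Fin 2) ℂ × (Fin 2 → ℂ) × ℂ} (hp : p ∈ normalForms E γ)
    (hl : ‖p.2.2‖ ≠ 1) : ∃ δ ∈ Γ, ∃ q ∈ normalForms E δ, 1 < ‖q.2.2‖ := by
  rcases hl.lt_or_gt with hlt | hgt
  · refine ⟨γ⁻¹, inv_mem hγ, _, inv_mem_normalForms hp, ?_⟩
    rw [norm_inv]
    exact one_lt_inv₀ (norm_pos_iff.mpr (ne_zero_of_mem_normalForms hp)) |>.mpr hlt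
  · exact ⟨γ, hγ, p, hp, hgt⟩

lemma exists_coordinates_translation_eq_zero (h : (U, b, l) ∈ normalForms E γ)
    (hl : ‖l‖ ≠ 1) :
    ∃ E' : ((Fin 2 → ℂ) × ℂ) ≃ₗ[ℂ] V3, (∀ x, E' (x, 0) = E (x, 0)) ∧
      (U, 0, l) ∈ normalForms E' γ := by
  obtain ⟨x₀, hx₀⟩ := exists_mulVec_add_eq_smul h.1 hl b
  let ψ : (Fin 2 → ℂ) →ₗ[ℂ] V3 := E.toLinearMap ∘ₗ LinearMap.inl ℂ (Fin 2 → ℂ) ℂ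
  have hw : E (x₀, 1) ∉ LinearMap.range ψ := mem_planeAtInfinity.not.mpr one_ne_zero
  have hψ : Function.Injective ψ := E.injective.comp LinearMap.inl_injective
  obtain ⟨E', hE'⟩ := exists_coordinates hψ hw
  have hEE' (x : Fin 2 → ℂ) (t : ℂ) : E' (x, t) = E (x + t • x₀, t) := by
    rw [hE', LinearMap.comp_apply, LinearEquiv.coe_coe, ← map_smul, ← map_add]
    simp
  refine ⟨E', fun x => by simp [hEE'], h.1, ?_⟩
  convert h.2 using 1
  refine ext_of_mulVec_coordinates E' fun x t => ?_
  have hshift : U *ᵥ (x + t • x₀) + t • b = U *ᵥ x + (l * t) • x₀ := by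
    rw [mulVec_add, mulVec_smul, add_assoc, ← smul_add, hx₀, smul_comm, mul_smul]
  rw [simMat_mulVec, hEE', hEE', simMat_mulVec]
  dsimp only
  rw [hshift, smul_zero, add_zero]

end AdaptedCoordinates

/-! ### Normality of groups of similarities -/

section Similarities

variable {Γ : Subgroup PSL3} {E : ((Fin 2 → ℂ) × ℂ) ≃ₗ[ℂ] V3}

lemma simMat_mulVec_eq_zero {p : Matrix (Fin 2) (Fin 2) ℂ × (Fin 2 → ℂ) × ℂ} {x : Fin 2 → ℂ} {t : ℂ}
    (ht : t ≠ 0) : simMat E p *ᵥ E (x, t) = 0 ↔ p.1 *ᵥ x + t • p.2.1 = 0 ∧ p.2.2 = 0 := by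
  rw [simMat_mulVec, E.map_eq_zero_iff, Prod.mk_eq_zero, mul_eq_zero_iff_right ht]

/- The condition `star U * U = ‖l‖² • 1` cuts out a closed cone containing the normal forms. -/
open scoped Matrix.Norms.Elementwise ComplexOrder in
lemma mk_mem_eqSet_of_norm_eq_one (hΓ : ∀ γ ∈ Γ, ∃ p ∈ normalForms E γ, ‖p.2.2‖ = 1) {v : V3}
    (hv : v ≠ 0) (hvE : v ∉ planeAtInfinity E) : Projectivization.mk ℂ v hv ∈ eqSet Γ := by
  refine mem_eqSet_of_isClosed_cone (simMat E)
    (S := {p | star p.1 * p.1 = (star p.2.2 * p.2.2) • (1 : Matrix (Fin 2) (Fin 2) ℂ)})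
    (isClosed_eq (by fun_prop) (by fun_prop)) (fun c p hp => ?_) (fun γ hγ => ?_) hv
    fun p hp h0 => ?_
  · change star (c • p.1) * (c • p.1) = (star (c * p.2.2) * (c * p.2.2)) • 1
    rw [star_smul, smul_mul_smul_comm, hp, smul_smul, star_mul']
    ring_nf
  · obtain ⟨p, hp, hl⟩ := hΓ γ hγ
    refine ⟨p, ?_, hp.2⟩
    change star p.1 * p.1 = (star p.2.2 * p.2.2) • 1
    rw [mem_unitaryGroup_iff'.mp hp.1, ← starRingEnd_apply, Complex.conj_mul', hl]
    simp
  · obtain ⟨⟨x, t⟩, rfl⟩ := E.surjective v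
    have ht : t ≠ 0 := mem_planeAtInfinity.not.mp hvE
    obtain ⟨hx, hl⟩ := (simMat_mulVec_eq_zero ht).mp h0
    have hU : p.1 = 0 := conjTranspose_mul_self_eq_zero.mp (hp.trans (by simp [hl]))
    have hb : p.2.1 = 0 := by simpa [hU, ht] using hx
    exact Prod.ext hU (Prod.ext hb hl)

open scoped Matrix.Norms.Elementwise ComplexOrder in
lemma mk_mem_eqSet_of_translation_eq_zero (hΓ : ∀ γ ∈ Γ, ∃ p ∈ normalForms E γ, p.2.1 = 0) {v : V3}
    (hv : v ≠ 0) (hvE : v ∉ planeAtInfinity E) (hv₀ : v ∉ Submodule.span ℂ {E (0, 1)}) :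
    Projectivization.mk ℂ v hv ∈ eqSet Γ := by
  let scalars : Submodule ℂ (Matrix (Fin 2) (Fin 2) ℂ) := Submodule.span ℂ {1}
  refine mem_eqSet_of_isClosed_cone (simMat E) (S := {p | star p.1 * p.1 ∈ scalars ∧ p.2.1 = 0})
    ?_ (fun c p hp => ?_) (fun γ hγ => ?_) hv fun p hp h0 => ?_
  · exact (scalars.closed_of_finiteDimensional.preimage (by fun_prop)).inter
      (isClosed_eq (by fun_prop) continuous_const)
  · refine ⟨?_, smul_eq_zero_of_right c hp.2⟩
    change star (c • p.1) * (c • p.1) ∈ scalars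
    rw [star_smul, smul_mul_smul_comm]
    exact scalars.smul_mem _ hp.1
  · obtain ⟨p, hp, hb⟩ := hΓ γ hγ
    refine ⟨p, ⟨?_, hb⟩, hp.2⟩
    rw [mem_unitaryGroup_iff'.mp hp.1]
    exact Submodule.mem_span_singleton_self _
  · obtain ⟨⟨x, t⟩, rfl⟩ := E.surjective v
    have ht : t ≠ 0 := mem_planeAtInfinity.not.mp hvE
    have hx : x ≠ 0 := by
      rintro rfl
      exact hv₀ (Submodule.mem_span_singleton.mpr ⟨t, by simp [← map_smul]⟩)
    obtain ⟨hUx, hl⟩ := (simMat_mulVec_eq_zero ht).mp h0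
    rw [hp.2, smul_zero, add_zero] at hUx
    obtain ⟨a, ha⟩ := Submodule.mem_span_singleton.mp hp.1
    have ha0 : a = 0 := by
      have : a • x = star p.1 *ᵥ p.1 *ᵥ x := by
        rw [mulVec_mulVec, ← ha, smul_mulVec, one_mulVec]
      simpa [hUx, hx] using this
    have hU : p.1 = 0 := conjTranspose_mul_self_eq_zero.mp (ha.symm.trans (by simp [ha0]))
    exact Prod.ext hU (Prod.ext hp.2 hl)

lemma exists_lt_norm_of_norm_eq_one [DiscreteTopology Γ] [Infinite Γ]
    (hΓ : ∀ γ ∈ Γ, ∃ p ∈ normalForms E γ, ‖p.2.2‖ = 1) (R : ℝ) :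
    ∃ γ ∈ Γ, ∃ p ∈ normalForms E γ, R < ‖p.2‖ := by
  by_contra! hbdd
  let P := (unitaryGroup (Fin 2) ℂ : Set (Matrix (Fin 2) (Fin 2) ℂ)) ×ˢ
    (Metric.closedBall (0 : (Fin 2 → ℂ) × ℂ) R ∩ {q | ‖q.2‖ = 1})
  have hP : IsCompact P := isCompact_unitaryGroup.prod ((isCompact_closedBall 0 R).inter_right
    (isClosed_eq (by fun_prop) continuous_const))
  have hK : IsCompact (simMat E '' P) := hP.image (simMat E).continuous_of_finiteDimensional
  have hdet : ∀ M ∈ simMat E '' P, M.det ≠ 0 := by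
    rintro _ ⟨⟨U, b, l⟩, ⟨hU, -, hl⟩, rfl⟩
    exact det_simMat_ne_zero hU (norm_ne_zero_iff.mp (ne_of_eq_of_ne hl one_ne_zero))
  have hfin := finite_of_isCompact (Γ := Γ) hK hdet
  refine Set.infinite_coe_iff.mp ‹Infinite Γ› (hfin.subset fun γ hγ => ?_)
  obtain ⟨p, hp, hl⟩ := hΓ γ hγ
  exact ⟨hγ, _, ⟨p, ⟨hp.1, mem_closedBall_zero_iff.mpr (hbdd γ hγ p hp), hl⟩, rfl⟩, hp.2⟩

lemma translation_unique {γ : PSL3} {U U' : Matrix (Fin 2) (Fin 2) ℂ} {b b' : Fin 2 → ℂ} {l : ℂ}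
    (h : (U, b, l) ∈ normalForms E γ) (h' : (U', b', l) ∈ normalForms E γ) : b = b' := by
  have hv : E (0, 1) ≠ 0 := E.map_ne_zero_iff.mpr (by simp)
  obtain ⟨a, ha⟩ := (mk_eq_mk_iff' ..).mp ((h.2.pact_mk hv).symm.trans (h'.2.pact_mk hv))
  rw [simMat_mulVec, simMat_mulVec, ← map_smul, E.injective.eq_iff, Prod.ext_iff] at ha
  have hl : a = 1 := by simpa [ne_zero_of_mem_normalForms h] using ha.2
  simpa [hl] using ha.1.symm

lemma conj_mem_normalForms {γ δ : PSL3} {U V : Matrix (Fin 2) (Fin 2) ℂ} {b : Fin 2 → ℂ} {l m : ℂ}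
    (hγ : (U, 0, l) ∈ normalForms E γ) (hδ : (V, b, m) ∈ normalForms E δ) :
    (U * V * star U, l⁻¹ • U *ᵥ b, m) ∈ normalForms E (γ * δ * γ⁻¹) := by
  have hl := ne_zero_of_mem_normalForms hγ
  convert mul_mem_normalForms (mul_mem_normalForms hγ hδ) (inv_mem_normalForms hγ) using 3
  · simp
  · field_simp

/- Conjugating by powers of the contraction `γ` shrinks the translation part of `δ`; discreteness
forces two of the conjugates to coincide. -/
lemma translation_eq_zero [DiscreteTopology Γ] {γ δ : PSL3} {U V : Matrix (Fin 2) (Fin 2) ℂ}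
    {b : Fin 2 → ℂ} {l m : ℂ} (hγ : γ ∈ Γ) (hU : (U, 0, l) ∈ normalForms E γ) (hl : 1 < ‖l‖)
    (hδ : δ ∈ Γ) (hV : (V, b, m) ∈ normalForms E δ) : b = 0 := by
  have hform (n : ℕ) := conj_mem_normalForms (pow_mem_normalForms hU n) hV
  let f : Matrix (Fin 2) (Fin 2) ℂ × Matrix (Fin 2) (Fin 2) ℂ × ℂ → Matrix (Fin 3) (Fin 3) ℂ :=
    fun q => simMat E (q.1, q.2.2 • q.2.1 *ᵥ b, m)
  let P := (unitaryGroup (Fin 2) ℂ : Set (Matrix (Fin 2) (Fin 2) ℂ)) ×ˢ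
    (unitaryGroup (Fin 2) ℂ : Set (Matrix (Fin 2) (Fin 2) ℂ)) ×ˢ Metric.closedBall (0 : ℂ) 1
  have hf : Continuous f :=
    (simMat E).continuous_of_finiteDimensional.comp (by fun_prop)
  have hK : IsCompact (f '' P) :=
    (isCompact_unitaryGroup.prod (isCompact_unitaryGroup.prod (isCompact_closedBall 0 1))).image hf
  have hdet : ∀ M ∈ f '' P, M.det ≠ 0 := by
    rintro _ ⟨q, hq, rfl⟩
    exact det_simMat_ne_zero hq.1 (ne_zero_of_mem_normalForms hV)
  have hmem (n : ℕ) : γ ^ n * δ * (γ ^ n)⁻¹ ∈ {g | g ∈ Γ ∧ ∃ M ∈ f '' P, Represents M g} := by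
    refine ⟨mul_mem (mul_mem (pow_mem hγ n) hδ) (inv_mem (pow_mem hγ n)), _,
      ⟨(U ^ n * V * star (U ^ n), U ^ n, (l ^ n)⁻¹), ⟨(hform n).1, pow_mem hU.1 n, ?_⟩, rfl⟩,
      (hform n).2⟩
    rw [mem_closedBall_zero_iff, norm_inv, norm_pow]
    exact inv_le_one_of_one_le₀ (one_le_pow₀ hl.le)
  obtain ⟨i, j, hij, heq⟩ := (finite_of_isCompact hK hdet).exists_lt_map_eq_of_forall_mem hmem
  obtain ⟨k, rfl⟩ := Nat.exists_eq_add_of_lt hij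
  have hl0 : l ≠ 0 := ne_zero_of_mem_normalForms hU
  have htrans := translation_unique (hform i) (by simpa only [heq] using hform (i + k + 1))
  have hfix : U ^ (k + 1) *ᵥ U ^ i *ᵥ b = l ^ (k + 1) • U ^ i *ᵥ b := by
    rw [mulVec_mulVec, ← pow_add, add_comm (k + 1), ← add_assoc,
      ← inv_smul_eq_iff₀ (pow_ne_zero _ hl0)]
    refine smul_right_injective _ (inv_ne_zero (pow_ne_zero i hl0)) ?_
    simp only [smul_smul, ← mul_inv, ← pow_add]
    exact htrans.symm
  have hnorm : ‖l ^ (k + 1)‖ ≠ 1 := by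
    rw [norm_pow]
    exact (one_lt_pow₀ hl k.succ_ne_zero).ne'
  exact mulVec_injective_of_mem_unitaryGroup (pow_mem hU.1 i)
    ((eq_zero_of_mulVec_eq_smul (pow_mem hU.1 _) hnorm hfix).trans (mulVec_zero _).symm)

end Similarities

/-! ### Failure of normality at infinity -/

section LineAtInfinity

open Filter

variable {Γ : Subgroup PSL3} {E : ((Fin 2 → ℂ) × ℂ) ≃ₗ[ℂ] V3}

lemma exists_tendsto_normalForms (hunb : ∀ R : ℝ, ∃ γ ∈ Γ, ∃ p ∈ normalForms E γ, R < ‖p.2‖) :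
    ∃ γ : ℕ → PSL3, (∀ n, γ n ∈ Γ) ∧ ∃ p : ℕ → Matrix (Fin 2) (Fin 2) ℂ × (Fin 2 → ℂ) × ℂ,
      (∀ n, p n ∈ normalForms E (γ n)) ∧
      (∃ U ∈ unitaryGroup (Fin 2) ℂ, Tendsto (fun n => (p n).1) (hyperfilter ℕ) (𝓝 U)) ∧
      ∃ r : ℕ → ℂ, (∀ n, r n ≠ 0) ∧
        ∃ q ≠ 0, Tendsto (fun n => r n • p n) (hyperfilter ℕ) (𝓝 (0, q)) := by
  choose γ hγ p hp hlt using fun n : ℕ => hunb n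
  have hpos (n : ℕ) : 0 < ‖(p n).2‖ := n.cast_nonneg.trans_lt (hlt n)
  let r : ℕ → ℂ := fun n => (‖(p n).2‖ : ℂ)⁻¹
  obtain ⟨U, hU, hlimU⟩ := isCompact_unitaryGroup.ultrafilter_le_nhds
    ((hyperfilter ℕ).map fun n => (p n).1) (tendsto_principal.mpr (.of_forall fun n => (hp n).1))
  obtain ⟨q, hq, hlimq⟩ := (isCompact_sphere (0 : (Fin 2 → ℂ) × ℂ) 1).ultrafilter_le_nhds
    ((hyperfilter ℕ).map fun n => r n • (p n).2) (tendsto_principal.mpr (.of_forall fun n => by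
      simp [r, norm_smul, (hpos n).ne']))
  have hr : Tendsto r (hyperfilter ℕ) (𝓝 0) := by
    refine tendsto_inv₀_cobounded.comp (tendsto_norm_atTop_iff_cobounded.mp ?_)
    simp only [Complex.norm_real, norm_norm]
    exact (tendsto_atTop_mono (fun n => (hlt n).le) tendsto_natCast_atTop_atTop).mono_left
      Nat.hyperfilter_le_atTop
  refine ⟨γ, hγ, p, hp, ⟨U, hU, hlimU⟩, r, fun n => by simp [r, (hpos n).ne'], q, ?_, ?_⟩
  · exact ne_zero_of_mem_unit_sphere ⟨q, hq⟩
  · exact Tendsto.prodMk_nhds (by simpa using hr.smul hlimU) hlimq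

lemma tendsto_pact_of_notMem_planeAtInfinity {ι : Type*} {F : Filter ι} {γ : ι → PSL3}
    {p : ι → Matrix (Fin 2) (Fin 2) ℂ × (Fin 2 → ℂ) × ℂ} (hp : ∀ i, p i ∈ normalForms E (γ i))
    {r : ι → ℂ} (hr : ∀ i, r i ≠ 0) {q : (Fin 2 → ℂ) × ℂ}
    (hlim : Tendsto (fun i => r i • p i) F (𝓝 (0, q))) (hq : E q ≠ 0) {z : P2}
    (hz : z ∉ pointsOf (planeAtInfinity E)) :
    Tendsto (fun i => pact (γ i) z) F (𝓝 (Projectivization.mk ℂ (E q) hq)) := by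
  induction z using Projectivization.ind with | h v hv => ?_
  obtain ⟨⟨x, t⟩, rfl⟩ := E.surjective v
  have ht : t ≠ 0 := mem_planeAtInfinity.not.mp ((mk_mem_pointsOf hv).not.mp hz)
  have hxt : simMat E (0, q) *ᵥ E (x, t) = t • E q := by
    rw [simMat_mulVec, ← map_smul]
    simp [Prod.smul_def, mul_comm t]
  have hmat := ((simMat E).continuous_of_finiteDimensional.tendsto _).comp hlim
  have hrep (i : ι) : Represents (simMat E (r i • p i)) (γ i) := by
    rw [map_smul]
    exact (hp i).2.smul (hr i)
  convert Represents.tendsto_pact hrep hmat hv (hxt ▸ smul_ne_zero ht hq) using 2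
  exact (mk_eq_mk_iff' ..).mpr ⟨t⁻¹, by rw [hxt, inv_smul_smul₀ ht]⟩

lemma tendsto_pact_planeAtInfinity {ι : Type*} {F : Filter ι} {γ : ι → PSL3}
    {p : ι → Matrix (Fin 2) (Fin 2) ℂ × (Fin 2 → ℂ) × ℂ} (hp : ∀ i, p i ∈ normalForms E (γ i))
    {U : Matrix (Fin 2) (Fin 2) ℂ} (hlim : Tendsto (fun i => (p i).1) F (𝓝 U)) {y : Fin 2 → ℂ}
    (hy : E (y, 0) ≠ 0) (hUy : E (U *ᵥ y, 0) ≠ 0) :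
    Tendsto (fun i => pact (γ i) (Projectivization.mk ℂ (E (y, 0)) hy)) F
      (𝓝 (Projectivization.mk ℂ (E (U *ᵥ y, 0)) hUy)) := by
  have hE : Continuous E := E.toLinearMap.continuous_of_finiteDimensional
  have hcont : Continuous fun V : Matrix (Fin 2) (Fin 2) ℂ => E (V *ᵥ y, 0) := by fun_prop
  refine tendsto_mk ((hcont.tendsto U).comp hlim) hUy fun i _ => ?_
  rw [(hp i).2.pact_mk hy]
  congr 1
  simp [simMat_mulVec, -mulVec_fin_two]

lemma comap_span_singleton_ne_top {T : (Fin 2 → ℂ) →ₗ[ℂ] V3} (hT : Function.Injective T) (v : V3) :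
    (Submodule.span ℂ {v}).comap T ≠ ⊤ := by
  intro h
  have hle : LinearMap.range T ≤ Submodule.span ℂ {v} := by
    rw [LinearMap.range_eq_map, Submodule.map_le_iff_le_comap]
    exact h.ge
  have hrank := (Submodule.finrank_mono hle).trans (finrank_span_le_card {v})
  rw [LinearMap.finrank_range_of_inj hT] at hrank
  simp at hrank

/- A limit map would be constant off the line at infinity, hence constant, but unitary along it. -/
lemma mk_notMem_eqSet_of_unbounded
    (hunb : ∀ R : ℝ, ∃ γ ∈ Γ, ∃ p ∈ normalForms E γ, R < ‖p.2‖) {v : V3} (hv : v ≠ 0)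
    (hvE : v ∈ planeAtInfinity E) : Projectivization.mk ℂ v hv ∉ eqSet Γ := by
  intro hmem
  obtain ⟨γ, hγ, p, hp, ⟨U, hU, hlimU⟩, r, hr, q, hq, hlim⟩ := exists_tendsto_normalForms hunb
  obtain ⟨O, hO, hvO, f, hf⟩ := exists_tendsto_of_mem_eqSet hmem (hyperfilter ℕ) hγ
  have hEq : E q ≠ 0 := E.map_ne_zero_iff.mpr hq
  have hconst : ∀ z : O, f z = Projectivization.mk ℂ (E q) hEq := by
    have hdense := (dense_compl_pointsOf (planeAtInfinity_ne_top (E := E))).preimage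
      hO.isOpenMap_subtype_val
    refine congrFun (Continuous.ext_on hdense f.continuous continuous_const fun z hz => ?_)
    exact tendsto_nhds_unique (hf z) (tendsto_pact_of_notMem_planeAtInfinity hp hr hlim hEq hz)
  let T : (Fin 2 → ℂ) →ₗ[ℂ] V3 := E.toLinearMap ∘ₗ LinearMap.inl ℂ (Fin 2 → ℂ) ℂ
  let S : Submodule ℂ (Fin 2 → ℂ) := (Submodule.span ℂ {E q}).comap (T ∘ₗ U.mulVecLin)
  have hT : Function.Injective T := E.injective.comp LinearMap.inl_injective
  have hTU : Function.Injective (T ∘ₗ U.mulVecLin) :=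
    hT.comp (mulVec_injective_of_mem_unitaryGroup hU)
  have hS : S = ⊤ := by
    obtain ⟨y, rfl⟩ := hvE
    have hopen := (isOpen_cone hO).preimage T.continuous_of_finiteDimensional
    refine S.eq_top_of_nonempty_interior' ⟨y, interior_maximal ?_ hopen ⟨hv, hvO⟩⟩
    rintro y ⟨hy, hyO⟩
    have hUy : T (U *ᵥ y) ≠ 0 := (map_ne_zero_iff _ hTU).mpr ((map_ne_zero_iff _ hT).mp hy)
    have hline := tendsto_nhds_unique (tendsto_pact_planeAtInfinity hp hlimU hy hUy) (hf ⟨_, hyO⟩)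
    exact Submodule.mem_span_singleton.mpr ((mk_eq_mk_iff' ..).mp (hline.trans (hconst _)))
  exact comap_span_singleton_ne_top hTU _ hS

lemma disjoint_pointsOf_planeAtInfinity_eqSet
    (hunb : ∀ R : ℝ, ∃ γ ∈ Γ, ∃ p ∈ normalForms E γ, R < ‖p.2‖) :
    Disjoint (pointsOf (planeAtInfinity E)) (eqSet Γ) := by
  refine Set.disjoint_left.mpr fun z hz => ?_
  induction z using Projectivization.ind with | h v hv => ?_
  exact mk_notMem_eqSet_of_unbounded hunb hv ((mk_mem_pointsOf hv).mp hz)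

end LineAtInfinity

/-! ### Lines in the complement -/

section Lines

lemma linesIn_compl_eq_singleton {Ω : Set P2} {W D : Submodule ℂ V3} (hW : Module.finrank ℂ W = 2)
    (hD : Module.finrank ℂ D ≤ 1) (hWΩ : Disjoint (pointsOf W) Ω)
    (hΩ : (pointsOf W ∪ pointsOf D)ᶜ ⊆ Ω) : linesIn Ωᶜ = {pointsOf W} := by
  refine Set.eq_singleton_iff_unique_mem.mpr
    ⟨⟨⟨W, hW, rfl⟩, Set.disjoint_left.mp hWΩ⟩, ?_⟩
  rintro _ ⟨⟨W', hW', rfl⟩, hsub⟩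
  have hunion : (W' : Set V3) ⊆ W ∪ D := by
    intro v hvW'
    rcases eq_or_ne v 0 with rfl | hv
    · exact Or.inl W.zero_mem
    by_contra hvWD
    refine hsub ((mk_mem_pointsOf hv).mpr hvW') (hΩ fun h => hvWD ?_)
    exact h.imp (mk_mem_pointsOf hv).mp (mk_mem_pointsOf hv).mp
  rcases AddSubgroupClass.subset_union.mp hunion with hle | hle
  · rw [Submodule.eq_of_le_of_finrank_eq hle (hW'.trans hW.symm)]
    rfl
  · have hrank : Module.finrank ℂ W' ≤ Module.finrank ℂ D := Submodule.finrank_mono hle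
    omega

lemma liG_eq_one {Ω : Set P2} {ℓ : Set P2} (h : linesIn Ωᶜ = {ℓ}) : LiG Ω = 1 := by
  have hsub : ∀ L ∈ genFamilies Ω, L ⊆ {ℓ} := fun L hL m hm => h ▸ hL.1 m hm
  have hℓ : {ℓ} ∈ genFamilies Ω := by
    refine ⟨fun m hm => h.ge hm, ?_⟩
    rintro p _ rfl _ rfl _ - - - -
    exact Or.inl rfl
  refine le_antisymm (iSup₂_le fun L hL => ?_) ?_
  · exact (Set.encard_le_encard (hsub L hL)).trans_eq (Set.encard_singleton ℓ)
  · exact (Set.encard_singleton ℓ).ge.trans (le_iSup₂_of_le {ℓ} hℓ le_rfl)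

end Lines

/-! ### Isometric and contracting groups -/

section Dichotomy

variable {Γ : Subgroup PSL3} {E : ((Fin 2 → ℂ) × ℂ) ≃ₗ[ℂ] V3}

lemma liG_eqSet_eq_one_of_norm_eq_one [DiscreteTopology Γ] [Infinite Γ]
    (hΓ : ∀ γ ∈ Γ, ∃ p ∈ normalForms E γ, ‖p.2.2‖ = 1) : LiG (eqSet Γ) = 1 := by
  refine liG_eq_one (linesIn_compl_eq_singleton finrank_planeAtInfinity (D := ⊥) (by simp)
    (disjoint_pointsOf_planeAtInfinity_eqSet (exists_lt_norm_of_norm_eq_one hΓ)) fun z hz => ?_)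
  induction z using Projectivization.ind with | h v hv => ?_
  exact mk_mem_eqSet_of_norm_eq_one hΓ hv fun hvE => hz (Or.inl ((mk_mem_pointsOf hv).mpr hvE))

lemma liG_eqSet_eq_one_of_contraction [DiscreteTopology Γ]
    (hΓ : ∀ γ ∈ Γ, (normalForms E γ).Nonempty) {γ : PSL3} (hγ : γ ∈ Γ)
    {U : Matrix (Fin 2) (Fin 2) ℂ} {l : ℂ} (hU : (U, 0, l) ∈ normalForms E γ)
    (hl : 1 < ‖l‖) : LiG (eqSet Γ) = 1 := by
  have hunb (R : ℝ) : ∃ γ ∈ Γ, ∃ p ∈ normalForms E γ, R < ‖p.2‖ := by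
    obtain ⟨n, hn⟩ := pow_unbounded_of_one_lt R hl
    exact ⟨γ ^ n, pow_mem hγ n, _, pow_mem_normalForms hU n,
      (hn.trans_eq (norm_pow l n).symm).trans_le (norm_snd_le (0, l ^ n))⟩
  have hfix : ∀ δ ∈ Γ, ∃ p ∈ normalForms E δ, p.2.1 = 0 := fun δ hδ =>
    have ⟨p, hp⟩ := hΓ δ hδ
    ⟨p, hp, translation_eq_zero hγ hU hl hδ hp⟩
  refine liG_eq_one (linesIn_compl_eq_singleton finrank_planeAtInfinity
    (D := Submodule.span ℂ {E (0, 1)})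
    (finrank_span_singleton (E.map_ne_zero_iff.mpr (by simp))).le
    (disjoint_pointsOf_planeAtInfinity_eqSet hunb) fun z hz => ?_)
  induction z using Projectivization.ind with | h v hv => ?_
  exact mk_mem_eqSet_of_translation_eq_zero hfix hv
    (fun hvE => hz (Or.inl ((mk_mem_pointsOf hv).mpr hvE)))
    fun hv₀ => hz (Or.inr ((mk_mem_pointsOf hv).mpr hv₀))

end Dichotomy

theorem liG_eqSet_eq_one_of_rotation_restriction_general (Γ : Subgroup PSL3) [DiscreteTopology Γ]
    [Infinite Γ] (ψ : (Fin 2 → ℂ) →ₗ[ℂ] V3) (hψ : Function.Injective ψ)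
    (hrot : ∀ γ ∈ Γ, ∃ A : SL3, (A : PSL3) = γ ∧ ∃ c : ℂ, c ≠ 0 ∧
      ∃ U ∈ unitaryGroup (Fin 2) ℂ, ∀ u, (A : Matrix (Fin 3) (Fin 3) ℂ) *ᵥ ψ u = ψ (c • U *ᵥ u)) :
    LiG (eqSet Γ) = 1 := by
  have hforms {E : ((Fin 2 → ℂ) × ℂ) ≃ₗ[ℂ] V3} (hE : ∀ x, E (x, 0) = ψ x) :
      ∀ γ ∈ Γ, (normalForms E γ).Nonempty := by
    intro γ hγ
    obtain ⟨A, rfl, c, hc, U, hU, hA⟩ := hrot γ hγ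
    exact nonempty_normalForms hE hc hU hA
  obtain ⟨w, hw⟩ : ∃ w, w ∉ LinearMap.range ψ := by
    by_contra! hmem
    have hrank := LinearMap.finrank_range_of_inj hψ
    rw [Submodule.eq_top_iff'.mpr hmem, finrank_top] at hrank
    simp at hrank
  obtain ⟨E, hE⟩ := exists_coordinates hψ hw
  have hE₀ : ∀ x, E (x, 0) = ψ x := fun x => by simp [hE]
  by_cases hiso : ∀ γ ∈ Γ, ∃ p ∈ normalForms E γ, ‖p.2.2‖ = 1
  · exact liG_eqSet_eq_one_of_norm_eq_one hiso
  · push Not at hiso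
    obtain ⟨γ, hγ, hne⟩ := hiso
    obtain ⟨p, hp⟩ := hforms hE₀ γ hγ
    obtain ⟨δ, hδ, ⟨U, b, l⟩, hq, hl⟩ := exists_one_lt_norm hγ hp (hne p hp)
    obtain ⟨E', hE', hfix⟩ := exists_coordinates_translation_eq_zero hq hl.ne'
    exact liG_eqSet_eq_one_of_contraction (hforms fun x => (hE' x).trans (hE₀ x)) hδ hfix hl

theorem liG_eqSet_eq_one_of_rotation_restriction
    (Γ : Subgroup PSL3) (hΓ : DiscreteTopology ↥Γ)
    (h1 : LiG ((CSet Γ)ᶜ) = 1)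
    (W : Submodule ℂ V3) (hW : Module.finrank ℂ W = 2) (ℓ : Set P2)
    (hℓ : ℓ = {x : P2 | x.submodule ≤ W}) (hsub : ℓ ⊆ CSet Γ)
    (huniq : ∀ ℓ' : Set P2, IsLine ℓ' → ℓ' ⊆ CSet Γ → ℓ' = ℓ)
    (hrot : ∃ ψ : (Fin 2 → ℂ) →ₗ[ℂ] V3, Function.Injective ψ ∧
      LinearMap.range ψ = W ∧
      ∀ γ ∈ Γ, ∃ A : SL3, (QuotientGroup.mk A : PSL3) = γ ∧
        ∃ c : ℂ, c ≠ 0 ∧ ∃ U ∈ Matrix.unitaryGroup (Fin 2) ℂ,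
          ∀ u : Fin 2 → ℂ,
            (A : Matrix (Fin 3) (Fin 3) ℂ).mulVec (ψ u) = ψ (c • U.mulVec u)) :
    LiG (eqSet Γ) = 1 := by
  obtain ⟨ψ, hψ, -, hrot⟩ := hrot
  have hW0 : W ≠ ⊥ := by
    rintro rfl
    simp at hW
  have : Infinite Γ :=
    infinite_of_nonempty_CSet ((pointsOf_nonempty hW0).mono (hℓ.symm.subset.trans hsub))
  exact liG_eqSet_eq_one_of_rotation_restriction_general Γ ψ hψ hrot
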